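/- Let M = cQ + εD ∈ 𝔻ℍ[t] be a bounded monic reduced motion polynomial of degree n with monic c ∈ ℝ[t], Q, D ∈ ℍ[t], mrpf(Q) = 1, and ν(M) = c²·ν(Q) = Nⁿ for some irreducible quadratic N ∈ ℝ[t]. Define g_L := mrpf(c, Q*·D) and g_R := mrpf(c, D·Q*). If M admits a factorization into monic linear motion polynomial factors, then c·g_L divides D·D* or c·g_R divides D·D* in ℝ[t]. -/

import Mathlib

open Polynomial DualNumber TrivSqZeroExt

noncomputable section

/-- The real quaternions. -/
abbrev Hq : Type := Quaternion ℝ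

/-- The dual quaternions. -/
abbrev DHq : Type := DualNumber Hq

/-- Conjugation of a dual quaternion: `(p + ε d)* = p* + ε d*`. -/
instance : Star DHq := ⟨fun x => inl (star x.fst) + inr (star x.snd)⟩

/-- Coefficient-wise (quaternion) conjugation of a polynomial. -/
def cstar {R : Type*} [Semiring R] [Star R] (A : R[X]) : R[X] :=
  A.sum fun n a => Polynomial.C (star a) * Polynomial.X ^ n

/-- The embedding `ℝ[t] → ℍ[t]`. -/
def qPoly (f : ℝ[X]) : Hq[X] := f.map (algebraMap ℝ Hq)

/-- The embedding `ℍ[t] → 𝔻ℍ[t]` (primal part). -/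
def dhQ (P : Hq[X]) : DHq[X] := P.map (inlHom Hq Hq)

/-- The embedding `ℝ[t] → 𝔻ℍ[t]`. -/
def dPoly (f : ℝ[X]) : DHq[X] := dhQ (qPoly f)

/-- The dual quaternion polynomial `P + ε D` with primal part `P` and dual part `D`. -/
def mp (P D : Hq[X]) : DHq[X] := dhQ P + Polynomial.C ε * dhQ D

/-- The primal part of a dual quaternion polynomial. -/
def primal (A : DHq[X]) : Hq[X] := A.map (fstHom ℝ Hq Hq).toRingHom

/-- A motion polynomial: a dual quaternion polynomial whose norm polynomial
`ν(M) = M·M*` is a nonzero real polynomial. -/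
def IsMotion (M : DHq[X]) : Prop := ∃ f : ℝ[X], f ≠ 0 ∧ M * cstar M = dPoly f

/-- A real polynomial divides a quaternion polynomial. -/
def RDvdQ (f : ℝ[X]) (A : Hq[X]) : Prop := ∃ B : Hq[X], A = qPoly f * B

/-- A real polynomial divides a dual quaternion polynomial. -/
def RDvdD (f : ℝ[X]) (A : DHq[X]) : Prop := ∃ B : DHq[X], A = dPoly f * B

/-- `g` is the greatest common monic real polynomial divisor of a quaternion polynomial `A`
(with itself), i.e. `g = mrpf A`. -/
def IsMrpfQ (g : ℝ[X]) (A : Hq[X]) : Prop :=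
  g.Monic ∧ RDvdQ g A ∧ ∀ f : ℝ[X], f.Monic → RDvdQ f A → f ∣ g

/-- `g` is the greatest common monic real polynomial divisor of `c ∈ ℝ[t]` and a quaternion
polynomial `A`, i.e. `g = mrpf(c, A)`. -/
def IsMrpf2 (g : ℝ[X]) (c : ℝ[X]) (A : Hq[X]) : Prop :=
  g.Monic ∧ g ∣ c ∧ RDvdQ g A ∧
    ∀ f : ℝ[X], f.Monic → f ∣ c → RDvdQ f A → f ∣ g

/-- `g` is the greatest common monic real polynomial divisor of `c ∈ ℝ[t]` and two quaternion
polynomials `A` and `B`, i.e. `g = mrpf(c, A, B)`. -/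
def IsMrpf3 (g : ℝ[X]) (c : ℝ[X]) (A B : Hq[X]) : Prop :=
  g.Monic ∧ g ∣ c ∧ RDvdQ g A ∧ RDvdQ g B ∧
    ∀ f : ℝ[X], f.Monic → f ∣ c → RDvdQ f A → RDvdQ f B → f ∣ g

/-- A quaternion polynomial is reduced: `mrpf = 1`, i.e. it has only constant real
polynomial factors. -/
def ReducedQ (A : Hq[X]) : Prop := ∀ f : ℝ[X], f.Monic → RDvdQ f A → f = 1

/-- A dual quaternion polynomial is reduced: `mrpf = 1`. -/
def ReducedD (A : DHq[X]) : Prop := ∀ f : ℝ[X], f.Monic → RDvdD f A → f = 1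

/-- Boundedness of a (monic reduced) motion polynomial: `mrpf` of its primal part has
no real root, equivalently no linear real polynomial `t - a` divides the primal part. -/
def BoundedD (M : DHq[X]) : Prop :=
  ∀ a : ℝ, ¬ RDvdQ (Polynomial.X - Polynomial.C a) (primal M)

/-- A generic motion polynomial: monic, a motion polynomial, with `mrpf` of the primal
part equal to `1`. -/
def GenericD (M : DHq[X]) : Prop :=
  M.Monic ∧ IsMotion M ∧ ReducedQ (primal M)

/-- The monic linear dual quaternion polynomial `t - p - ε d`. -/
def lin (p d : Hq) : DHq[X] := mp (Polynomial.X - Polynomial.C p) (-Polynomial.C d)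

/-- `M` admits a factorization into monic linear motion polynomial factors. -/
def HasLinFact (M : DHq[X]) : Prop :=
  ∃ L : List DHq, (∀ h ∈ L, IsMotion (Polynomial.X - Polynomial.C h)) ∧
    M = (L.map fun h => Polynomial.X - Polynomial.C h).prod

end
section Aux

lemma coeff_sum_map {R S : Type*} [Semiring R] [Semiring S] (φ : R → S) (h0 : φ 0 = 0) (A : R[X]) (n : ℕ) :
    (A.sum fun n a => Polynomial.C (φ a) * Polynomial.X ^ n).coeff n = φ (A.coeff n) := by
  rw [Polynomial.sum_def, Polynomial.finsetSum_coeff]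
  simp only [Polynomial.coeff_C_mul_X_pow]
  rw [Finset.sum_ite_eq]
  split_ifs with h
  · rfl
  · rw [Polynomial.notMem_support_iff.1 h, h0]

lemma cstar_coeff (A : Hq[X]) (n : ℕ) : (cstar A).coeff n = star (A.coeff n) :=
  coeff_sum_map _ (star_zero _) A n

lemma cstar_coeffD (A : DHq[X]) (n : ℕ) : (cstar A).coeff n = star (A.coeff n) := by
  apply coeff_sum_map
  show inl (star (0 : Hq)) + inr (star (0 : Hq)) = (0 : DHq)
  simp

noncomputable def reP (A : Hq[X]) : ℝ[X] := A.sum fun n a => Polynomial.C a.re * Polynomial.X ^ n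

lemma reP_coeff (A : Hq[X]) (n : ℕ) : (reP A).coeff n = (A.coeff n).re :=
  coeff_sum_map (fun a : Hq => a.re) rfl A n

lemma qPoly_coeff (f : ℝ[X]) (n : ℕ) : (qPoly f).coeff n = ((f.coeff n : ℝ) : Hq) := by
  simp [qPoly]

lemma qPoly_mul (f g : ℝ[X]) : qPoly (f * g) = qPoly f * qPoly g := Polynomial.map_mul _
lemma qPoly_add (f g : ℝ[X]) : qPoly (f + g) = qPoly f + qPoly g := Polynomial.map_add _
lemma qPoly_one : qPoly 1 = 1 := Polynomial.map_one _
lemma qPoly_pow (f : ℝ[X]) (n : ℕ) : qPoly (f ^ n) = qPoly f ^ n := Polynomial.map_pow _ _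
lemma qPoly_inj {f g : ℝ[X]} (h : qPoly f = qPoly g) : f = g :=
  Polynomial.map_injective _ (algebraMap ℝ Hq).injective h

lemma qPoly_ne {f : ℝ[X]} (h : f ≠ 0) : qPoly f ≠ 0 := by
  intro h'
  exact h (qPoly_inj (h'.trans (Polynomial.map_zero _).symm))

lemma qPoly_comm (f : ℝ[X]) (A : Hq[X]) : qPoly f * A = A * qPoly f := by
  ext1 n
  rw [Polynomial.coeff_mul, Polynomial.coeff_mul, ← Finset.Nat.sum_antidiagonal_swap]
  refine Finset.sum_congr rfl fun x _ => ?_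
  simp only [qPoly_coeff, Prod.fst_swap, Prod.snd_swap]
  exact Quaternion.coe_commutes _ _

lemma cstar_add (A B : Hq[X]) : cstar (A + B) = cstar A + cstar B := by
  ext1 n; simp [cstar_coeff]
lemma cstar_neg (A : Hq[X]) : cstar (-A) = -cstar A := by
  ext1 n; simp [cstar_coeff]
lemma cstar_cstar (A : Hq[X]) : cstar (cstar A) = A := by
  ext1 n; simp [cstar_coeff]
lemma cstar_zero : cstar (0 : Hq[X]) = 0 := by
  ext1 n; simp [cstar_coeff]
lemma cstar_mul (A B : Hq[X]) : cstar (A * B) = cstar B * cstar A := by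
  ext1 n
  rw [cstar_coeff, Polynomial.coeff_mul, Polynomial.coeff_mul, ← Finset.Nat.sum_antidiagonal_swap]
  simp [cstar_coeff, star_sum]
lemma cstar_qPoly (f : ℝ[X]) : cstar (qPoly f) = qPoly f := by
  ext1 n; simp [cstar_coeff, qPoly_coeff]
lemma cstar_one : cstar (1 : Hq[X]) = 1 := by
  rw [← qPoly_one, cstar_qPoly]

lemma add_cstar (A : Hq[X]) : A + cstar A = qPoly (2 * reP A) := by
  ext1 n
  rw [two_mul, qPoly_coeff, Polynomial.coeff_add, cstar_coeff, Polynomial.coeff_add, reP_coeff]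
  ext <;> simp

lemma reP_comm (A B : Hq[X]) : reP (A * B) = reP (B * A) := by
  ext1 n
  rw [reP_coeff, reP_coeff, Polynomial.coeff_mul, Polynomial.coeff_mul,
    ← Finset.Nat.sum_antidiagonal_swap]
  have : ∀ (s : Finset (ℕ × ℕ)) (f : ℕ × ℕ → Hq), (∑ i ∈ s, f i).re = ∑ i ∈ s, (f i).re := by
    intro s f
    induction s using Finset.cons_induction with
    | empty => rfl
    | cons a s ha ih => rw [Finset.sum_cons, Finset.sum_cons, ← ih, Quaternion.re_add]
  rw [this, this]
  refine Finset.sum_congr rfl fun x _ => ?_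
  simp; ring

lemma reP_qmul (f : ℝ[X]) (A : Hq[X]) : reP (qPoly f * A) = f * reP A := by
  have h2 : qPoly (2 * reP (qPoly f * A)) = qPoly (2 * (f * reP A)) := by
    rw [← add_cstar, cstar_mul, cstar_qPoly, ← qPoly_comm, ← mul_add, add_cstar, ← qPoly_mul]
    congr 1; ring
  exact mul_left_cancel₀ two_ne_zero (qPoly_inj h2)

lemma mul_cstar_real (A : Hq[X]) : A * cstar A = qPoly (reP (A * cstar A)) := by
  have h := add_cstar (A * cstar A)
  rw [cstar_mul, cstar_cstar, qPoly_mul] at h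
  have h2 : qPoly 2 = 2 := by
    have : (2 : ℝ[X]) = 1 + 1 := by norm_num
    rw [this, qPoly_add, qPoly_one]; norm_num
  have h3 : (2 : Hq[X]) ≠ 0 := by rw [← h2]; exact qPoly_ne two_ne_zero
  rw [h2, ← two_mul] at h
  exact mul_left_cancel₀ h3 h

lemma RDvdQ.add {f : ℝ[X]} {A B : Hq[X]} (h : RDvdQ f A) (h' : RDvdQ f B) : RDvdQ f (A + B) := by
  obtain ⟨a, rfl⟩ := h
  obtain ⟨b, rfl⟩ := h'
  exact ⟨a + b, by rw [mul_add]⟩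
lemma RDvdQ.neg {f : ℝ[X]} {A : Hq[X]} (h : RDvdQ f A) : RDvdQ f (-A) := by
  obtain ⟨a, rfl⟩ := h
  exact ⟨-a, by rw [mul_neg]⟩
lemma RDvdQ.sub {f : ℝ[X]} {A B : Hq[X]} (h : RDvdQ f A) (h' : RDvdQ f B) : RDvdQ f (A - B) := by
  rw [sub_eq_add_neg]; exact h.add h'.neg
lemma RDvdQ.mul_right {f : ℝ[X]} {A : Hq[X]} (h : RDvdQ f A) (B : Hq[X]) : RDvdQ f (A * B) := by
  obtain ⟨a, rfl⟩ := h
  exact ⟨a * B, by rw [mul_assoc]⟩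
lemma RDvdQ.mul_left {f : ℝ[X]} {A : Hq[X]} (h : RDvdQ f A) (B : Hq[X]) : RDvdQ f (B * A) := by
  obtain ⟨a, rfl⟩ := h
  exact ⟨B * a, by rw [← mul_assoc, ← qPoly_comm, mul_assoc]⟩
lemma RDvdQ.cstar {f : ℝ[X]} {A : Hq[X]} (h : RDvdQ f A) : RDvdQ f (cstar A) := by
  obtain ⟨a, rfl⟩ := h
  exact ⟨_root_.cstar a, by rw [cstar_mul, cstar_qPoly, qPoly_comm]⟩
lemma RDvdQ.trans {f g : ℝ[X]} {A : Hq[X]} (h : f ∣ g) (h' : RDvdQ g A) : RDvdQ f A := by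
  obtain ⟨a, rfl⟩ := h'
  obtain ⟨k, rfl⟩ := h
  exact ⟨qPoly k * a, by rw [qPoly_mul, mul_assoc]⟩
lemma RDvdQ.refl (f : ℝ[X]) : RDvdQ f (qPoly f) := ⟨1, by rw [mul_one]⟩
lemma RDvdQ.of_real {f g : ℝ[X]} (h : RDvdQ f (qPoly g)) : f ∣ g := by
  obtain ⟨a, h⟩ := h
  have h1 := congrArg reP h
  rw [reP_qmul] at h1
  have : reP (qPoly g) = g := by ext1 n; simp [reP_coeff, qPoly_coeff]
  exact ⟨_, this.symm.trans h1⟩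
lemma RDvdQ.mul {f g : ℝ[X]} {A B : Hq[X]} (h : RDvdQ f A) (h' : RDvdQ g B) :
    RDvdQ (f * g) (A * B) := by
  obtain ⟨a, rfl⟩ := h
  obtain ⟨b, rfl⟩ := h'
  refine ⟨a * b, ?_⟩
  rw [qPoly_mul, mul_assoc, ← mul_assoc a, ← qPoly_comm g a]
  simp only [mul_assoc]
lemma RDvdQ.cancel {f g : ℝ[X]} {A : Hq[X]} (hf : f ≠ 0) (h : RDvdQ (f * g) (qPoly f * A)) :
    RDvdQ g A := by
  obtain ⟨a, h⟩ := h
  rw [qPoly_mul, mul_assoc] at h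
  exact ⟨a, mul_left_cancel₀ (qPoly_ne hf) h⟩

noncomputable def qi : Hq := ⟨0, 1, 0, 0⟩
noncomputable def qj : Hq := ⟨0, 0, 1, 0⟩
noncomputable def qk : Hq := ⟨0, 0, 0, 1⟩

@[simp] lemma qi_re : qi.re = 0 := rfl
@[simp] lemma qi_imI : qi.imI = 1 := rfl
@[simp] lemma qi_imJ : qi.imJ = 0 := rfl
@[simp] lemma qi_imK : qi.imK = 0 := rfl
@[simp] lemma qj_re : qj.re = 0 := rfl
@[simp] lemma qj_imI : qj.imI = 0 := rfl
@[simp] lemma qj_imJ : qj.imJ = 1 := rfl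
@[simp] lemma qj_imK : qj.imK = 0 := rfl
@[simp] lemma qk_re : qk.re = 0 := rfl
@[simp] lemma qk_imI : qk.imI = 0 := rfl
@[simp] lemma qk_imJ : qk.imJ = 0 := rfl
@[simp] lemma qk_imK : qk.imK = 1 := rfl

lemma recon (v : Hq[X]) : v = qPoly (reP v) - C qi * qPoly (reP (C qi * v))
    - C qj * qPoly (reP (C qj * v)) - C qk * qPoly (reP (C qk * v)) := by
  ext1 n
  simp only [Polynomial.coeff_sub, Polynomial.coeff_C_mul, qPoly_coeff, reP_coeff]
  ext <;> simp

lemma four (v : Hq[X]) : qPoly (4 * reP v) = v - C qi * v * C qi - C qj * v * C qj - C qk * v * C qk := by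
  ext1 n
  have : (4 * reP v).coeff n = 4 * (v.coeff n).re := by
    rw [← reP_coeff, ← Polynomial.coeff_C_mul]; rfl
  simp only [Polynomial.coeff_sub, Polynomial.coeff_C_mul, Polynomial.coeff_mul_C, qPoly_coeff, this]
  ext <;> simp <;> ring

lemma prime_core {N : ℝ[X]} (hN : Irreducible N) {v y : Hq[X]} (h : ∀ u, RDvdQ N (v * u * y)) :
    RDvdQ N v ∨ RDvdQ N y := by
  by_contra hcon
  push Not at hcon
  obtain ⟨hv, hy⟩ := hcon
  have key : ∀ e, N ∣ reP (e * v) := by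
    intro e
    by_contra hne
    apply hy
    have h4 : RDvdQ N (qPoly (4 * reP (e * v)) * y) := by
      rw [four]
      have hh : ∀ u, RDvdQ N (e * v * u * y) := fun u => by
        have := (h u).mul_left e
        simpa only [mul_assoc] using this
      have := ((((hh 1)).sub ((hh (C qi)).mul_left (C qi))).sub ((hh (C qj)).mul_left (C qj))).sub
        ((hh (C qk)).mul_left (C qk))
      simpa only [sub_mul, mul_assoc, one_mul] using this
    have hcop : IsCoprime N (4 * reP (e * v)) := by
      refine (Irreducible.coprime_iff_not_dvd hN).2 fun hd => ?_
      rcases hN.prime.dvd_or_dvd hd with h | h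
      · have : IsUnit (4 : ℝ[X]) := by
          have : (4 : ℝ[X]) = C 4 := rfl
          rw [this]; exact Polynomial.isUnit_C.2 (by norm_num)
        exact hN.not_isUnit (isUnit_of_dvd_unit h this)
      · exact hne h
    obtain ⟨a, b, hab⟩ := hcop
    have : y = qPoly a * qPoly N * y + qPoly b * (qPoly (4 * reP (e * v)) * y) := by
      rw [← mul_assoc, ← add_mul, ← qPoly_mul, ← qPoly_mul, ← qPoly_add, hab, qPoly_one, one_mul]
    rw [this]
    exact (((RDvdQ.refl N).mul_left _).mul_right _).add (h4.mul_left _)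
  apply hv
  have kk : ∀ e, RDvdQ N (qPoly (reP (e * v))) := fun e => RDvdQ.trans (key e) (RDvdQ.refl _)
  rw [recon v]
  have := (((kk 1).sub ((kk (C qi)).mul_left (C qi))).sub ((kk (C qj)).mul_left (C qj))).sub
        ((kk (C qk)).mul_left (C qk))
  simpa only [one_mul] using this

lemma keyK {N : ℝ[X]} (hN : Irreducible N) {x z w : Hq[X]} (hz : RDvdQ N (z * cstar z))
    (h : RDvdQ N (x * z * w)) : RDvdQ N (x * z) ∨ RDvdQ N (z * w) := by
  refine (prime_core hN (v := z * w) (y := x * z) fun u => ?_).symm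
  have e : z * w * u * (x * z) = z * qPoly (2 * reP (w * u * x * z)) - z * cstar z * cstar (w * u * x) := by
    rw [← add_cstar, cstar_mul (w * u * x)]; noncomm_ring
  rw [e]
  refine RDvdQ.sub (RDvdQ.mul_left (RDvdQ.trans ?_ (RDvdQ.refl _)) _) (hz.mul_right _)
  have e2 : reP (w * u * x * z) = reP (u * (x * z * w)) := by
    rw [show w * u * x * z = w * (u * x * z) by noncomm_ring, reP_comm]
    congr 1; noncomm_ring
  rw [e2]
  obtain ⟨B, hB⟩ := h.mul_left u
  rw [hB, reP_qmul]
  exact ⟨2 * reP B, by ring⟩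
end Aux

section Aux2

structure LF (N : ℝ[X]) (l d : Hq[X]) : Prop where
  lin : ∃ p : Hq, l = X - C p
  h1 : l * cstar l = qPoly N
  h2 : cstar l * l = qPoly N
  h3 : l * cstar d + d * cstar l = 0
  h4 : cstar l * d + cstar d * l = 0

inductive Fact2 (N : ℝ[X]) : Hq[X] → Hq[X] → Prop
  | one : Fact2 N 1 0
  | snoc (P D l d : Hq[X]) : Fact2 N P D → LF N l d → Fact2 N (P * l) (D * l + P * d)

lemma deg_zero {N : ℝ[X]} (hN2 : N.natDegree = 2) {A : Hq[X]} (h : RDvdQ N A)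
    (hA : A.natDegree ≤ 1) : A = 0 := by
  obtain ⟨B, rfl⟩ := h
  by_contra hne
  have hq : qPoly N ≠ 0 := left_ne_zero_of_mul hne
  have hB : B ≠ 0 := right_ne_zero_of_mul hne
  rw [Polynomial.natDegree_mul hq hB] at hA
  have : (qPoly N).natDegree = 2 := by
    rw [← hN2]; exact Polynomial.natDegree_map_eq_of_injective (algebraMap ℝ Hq).injective N
  omega

lemma cstar_lin (p : Hq) : cstar (X - C p) = X - C (star p) := by
  ext1 n
  rw [cstar_coeff]
  simp only [Polynomial.coeff_sub, Polynomial.coeff_X, Polynomial.coeff_C, star_sub]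
  split_ifs <;> simp

lemma LF.not_dvd {N : ℝ[X]} (hN2 : N.natDegree = 2) {l d : Hq[X]} (h : LF N l d) : ¬ RDvdQ N l := by
  intro hd
  obtain ⟨p, hp⟩ := h.lin
  have := deg_zero hN2 hd (by rw [hp, Polynomial.natDegree_X_sub_C])
  rw [hp] at this
  exact Polynomial.X_sub_C_ne_zero p this

lemma LF.eq_star {N : ℝ[X]} (hN2 : N.natDegree = 2) {l d l2 d2 : Hq[X]} (h : LF N l d)
    (h2 : LF N l2 d2) (hd : RDvdQ N (l2 * l)) : l2 = cstar l := by
  obtain ⟨p, hp⟩ := h.lin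
  obtain ⟨p2, hp2⟩ := h2.lin
  have e : l2 - cstar l = C (star p - p2) := by
    rw [hp, hp2, cstar_lin, Polynomial.C_sub]; abel
  have h3 : RDvdQ N ((l2 - cstar l) * l) := by
    rw [sub_mul, h.h2]; exact hd.sub (RDvdQ.refl _)
  have h4 := deg_zero hN2 h3 (by
    rw [e]
    refine (Polynomial.natDegree_C_mul_le _ _).trans ?_
    rw [hp, Polynomial.natDegree_X_sub_C])
  rcases mul_eq_zero.1 h4 with h5 | h5
  · exact sub_eq_zero.1 h5
  · rw [hp] at h5
    exact absurd h5 (Polynomial.X_sub_C_ne_zero p)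

lemma Fact2.norm {N : ℝ[X]} {P D : Hq[X]} (h : Fact2 N P D) :
    ∃ j : ℕ, P * cstar P = qPoly (N ^ j) ∧ cstar P * P = qPoly (N ^ j) := by
  induction h with
  | one => exact ⟨0, by simp [cstar_one, qPoly_one]⟩
  | snoc P D l d _ hl ih =>
    obtain ⟨j, e1, e2⟩ := ih
    refine ⟨j + 1, ?_, ?_⟩
    · rw [cstar_mul, show P * l * (cstar l * cstar P) = P * (l * cstar l) * cstar P by noncomm_ring,
        hl.h1, ← qPoly_comm, mul_assoc, e1, ← qPoly_mul, pow_succ']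
    · rw [cstar_mul, show cstar l * cstar P * (P * l) = cstar l * (cstar P * P) * l by noncomm_ring,
        e2, ← qPoly_comm, mul_assoc, hl.h2, ← qPoly_mul, pow_succ]

/-- the local structure -/
def Struc (N : ℝ[X]) (m : ℕ) (Q D : Hq[X]) : Prop :=
  ∃ Q1 a Q2 c b : Hq[X], Fact2 N Q1 a ∧ Fact2 N Q2 c ∧ Q = Q1 * Q2 ∧
    D = Q1 * b * Q2 + qPoly (N ^ m) * (Q1 * c + a * Q2) ∧
    b + cstar b = 0 ∧ RDvdQ (N ^ m) (b * cstar b)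

lemma step {N : ℝ[X]} (hN2 : N.natDegree = 2) (hN : Irreducible N) {m : ℕ}
    {Q1 a b l d Q' : Hq[X]} (hF : Fact2 N Q1 a) (hl : LF N l d) (hQ1 : ¬ RDvdQ N Q1)
    (hQ' : Q1 * l = qPoly N * Q')
    (hb : b + cstar b = 0) (hbN : RDvdQ (N ^ m) (b * cstar b)) :
    Struc N (m + 1) Q' ((Q1 * b + qPoly (N ^ m) * a) * l + qPoly (N ^ m) * Q1 * d) := by
  have hN0 : qPoly N ≠ 0 := qPoly_ne hN.ne_zero
  cases hF with
  | one =>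
    exact absurd ⟨Q', by rw [← hQ', one_mul]⟩ (hl.not_dvd hN2)
  | snoc W A l2 d2 hW hl2 =>
    have hll : RDvdQ N (l2 * l) := by
      rcases keyK hN (x := W) (z := l2) (w := l) (by rw [hl2.h1]; exact RDvdQ.refl _) ⟨Q', hQ'⟩ with h | h
      · exact absurd h hQ1
      · exact h
    have e := hl.eq_star hN2 hl2 hll
    subst e
    have hWQ : W = Q' := by
      rw [mul_assoc, hl.h2, ← qPoly_comm] at hQ'
      exact mul_left_cancel₀ hN0 hQ'
    subst hWQ
    have h3 := hl2.h3
    rw [cstar_cstar] at h3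
    have hbs : cstar b = -b := by rw [eq_neg_iff_add_eq_zero, add_comm]; exact hb
    set b' := cstar l * b * l + qPoly (N ^ m) * (cstar l * d + d2 * l) with hb'
    have hb's : b' + cstar b' = 0 := by
      rw [hb']
      simp only [cstar_add, cstar_mul, cstar_cstar, cstar_qPoly, hbs]
      rw [← qPoly_comm]
      have : cstar l * b * l + qPoly (N ^ m) * (cstar l * d + d2 * l)
        + (cstar l * (-b * l) + qPoly (N ^ m) * (cstar d * l + cstar l * cstar d2))
        = qPoly (N ^ m) * ((cstar l * d + cstar d * l) + (cstar l * cstar d2 + d2 * l)) := by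
        noncomm_ring
      rw [this, hl.h4, h3]; simp
    have hb'e : b' = cstar l * (b * l + qPoly (N ^ m) * (d - cstar d2)) := by
      have h3' : d2 * l = - (cstar l * cstar d2) := by
        rw [eq_neg_iff_add_eq_zero, add_comm]; exact h3
      rw [hb', h3', mul_add (cstar l), ← mul_assoc (cstar l) (qPoly (N ^ m)), ← qPoly_comm]
      noncomm_ring
    have hb'n : b' * cstar b' = cstar b' * b' := by
      have : cstar b' = -b' := by rw [eq_neg_iff_add_eq_zero, add_comm]; exact hb's
      rw [this]; noncomm_ring
    refine ⟨W, A, 1, 0, b', hW, .one, by simp, ?_, hb's, ?_⟩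
    · rw [hb', pow_succ, qPoly_mul]
      have : (W * cstar l * b + qPoly (N ^ m) * (A * cstar l + W * d2)) * l
          + qPoly (N ^ m) * (W * cstar l) * d
          = W * (cstar l * b * l) + qPoly (N ^ m) * W * (cstar l * d + d2 * l)
            + qPoly (N ^ m) * (A * (cstar l * l)) := by noncomm_ring
      rw [this, hl.h2, ← qPoly_comm N A, qPoly_comm _ W]
      noncomm_ring
    · rw [hb'n, hb'e, cstar_mul, cstar_cstar]
      set e := b * l + qPoly (N ^ m) * (d - cstar d2) with he
      rw [show cstar e * l * (cstar l * e) = cstar e * (l * cstar l) * e by noncomm_ring, hl.h1,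
        ← qPoly_comm, mul_assoc, pow_succ']
      refine (RDvdQ.refl N).mul ?_
      rw [show cstar e * e = cstar e * (b * l) + cstar e * (qPoly (N ^ m) * (d - cstar d2)) by
        conv_lhs => rw [he, mul_add], show cstar e = cstar l * cstar b + cstar (d - cstar d2) * qPoly (N ^ m) by
          rw [he, cstar_add, cstar_mul, cstar_mul, cstar_qPoly]]
      refine RDvdQ.add ?_ ((((RDvdQ.refl _)).mul_right _).mul_left _)
      rw [add_mul]
      refine RDvdQ.add ?_ ((((RDvdQ.refl _)).mul_left _).mul_right _)
      rw [show cstar l * cstar b * (b * l) = cstar l * (cstar b * b) * l by noncomm_ring]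
      refine RDvdQ.mul_right (RDvdQ.mul_left ?_ _) _
      rw [hbs] at hbN ⊢
      rw [neg_mul]; rw [mul_neg] at hbN; exact hbN

lemma struc_exists {N : ℝ[X]} (hN2 : N.natDegree = 2) (hN : Irreducible N) {P D : Hq[X]}
    (h : Fact2 N P D) : ∃ m : ℕ, ∃ Q, P = qPoly (N ^ m) * Q ∧ ¬ RDvdQ N Q ∧
      (m = 0 ∨ (1 ≤ m ∧ RDvdQ N D) ∨ (1 ≤ m ∧ Struc N m Q D)) := by
  have hN0 : qPoly N ≠ 0 := qPoly_ne hN.ne_zero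
  have hpow : ∀ m : ℕ, 1 ≤ m → ∀ A, RDvdQ N (qPoly (N ^ m) * A) := fun m hm A =>
    RDvdQ.mul_right (RDvdQ.trans (dvd_pow_self N (by omega)) (RDvdQ.refl _)) _
  induction h with
  | one =>
    refine ⟨0, 1, by simp [qPoly_one], ?_, Or.inl rfl⟩
    intro h
    have := deg_zero hN2 h (by simp)
    exact one_ne_zero this
  | snoc P D l d hF hl ih =>
    obtain ⟨m, Q, hP, hQ, hor⟩ := ih
    by_cases hd : RDvdQ N (Q * l)
    · obtain ⟨Q', hQ'⟩ := hd
      have hQQ : Q = Q' * cstar l := by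
        have : qPoly N * Q = qPoly N * (Q' * cstar l) := by
          rw [← mul_assoc, ← hQ', mul_assoc, hl.h1, qPoly_comm]
        exact mul_left_cancel₀ hN0 this
      refine ⟨m + 1, Q', ?_, ?_, Or.inr ?_⟩
      · rw [hP, mul_assoc, hQ', pow_succ, qPoly_mul, mul_assoc]
      · intro h; apply hQ; rw [hQQ]; exact h.mul_right _
      · rcases hor with hm | ⟨hm, hD⟩ | ⟨hm, Q1, a, Q2, c, b, hQ1, hQ2, hQe, hDe, hb, hbN⟩
        · subst hm
          simp only [pow_zero, qPoly_one, one_mul] at hP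
          subst hP
          right
          refine ⟨by omega, ?_⟩
          have := step hN2 hN (m := 0) (b := 0) hF hl hQ hQ' (by simp [cstar_zero]) ⟨0, by simp⟩
          simpa [qPoly_one] using this
        · left
          refine ⟨by omega, (hD.mul_right _).add ?_⟩
          rw [hP, mul_assoc]; exact hpow m hm _
        · cases hQ2 with
          | one =>
            right
            refine ⟨by omega, ?_⟩
            rw [mul_one] at hQe
            subst hQe
            have := step hN2 hN hQ1 hl hQ hQ' hb hbN
            rw [hDe, hP]
            simpa using this
          | snoc R c' l2 d2 hR hl2 =>
            left
            refine ⟨by omega, ?_⟩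
            have hll : RDvdQ N (l2 * l) := by
              rcases keyK hN (x := Q1 * R) (z := l2) (w := l)
                (by rw [hl2.h1]; exact RDvdQ.refl _) ⟨Q', by rw [← hQ', hQe]; noncomm_ring⟩ with h | h
              · exact absurd (by rw [hQe, ← mul_assoc]; exact h) hQ
              · exact h
            refine RDvdQ.add ?_ (by rw [hP, mul_assoc]; exact hpow m hm _)
            rw [hDe, add_mul, mul_assoc (qPoly (N ^ m))]
            refine RDvdQ.add ?_ (hpow m hm _)
            rw [show Q1 * b * (R * l2) * l = Q1 * b * R * (l2 * l) by noncomm_ring]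
            exact hll.mul_left _
    · refine ⟨m, Q * l, by rw [hP, mul_assoc], hd, ?_⟩
      rcases hor with hm | ⟨hm, hD⟩ | ⟨hm, Q1, a, Q2, c, b, hQ1, hQ2, hQe, hDe, hb, hbN⟩
      · exact Or.inl hm
      · refine Or.inr (Or.inl ⟨hm, (hD.mul_right _).add ?_⟩)
        rw [hP, mul_assoc]; exact hpow m hm _
      · refine Or.inr (Or.inr ⟨hm, Q1, a, Q2 * l, c * l + Q2 * d, b, hQ1, hQ2.snoc _ _ _ _ hl, ?_, ?_, hb, hbN⟩)
        · rw [hQe, mul_assoc]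
        · rw [hDe, hP, hQe]; noncomm_ring

lemma finish {N : ℝ[X]} (hN : Irreducible N) {m rL rR : ℕ} {Q D : Hq[X]}
    (hm : 1 ≤ m) (hS : Struc N m Q D) (hD : ¬ RDvdQ N D) (hL : rL ≤ m) (hR : rR ≤ m)
    (hgL : RDvdQ (N ^ rL) (cstar Q * D)) (hgR : RDvdQ (N ^ rR) (D * cstar Q)) :
    RDvdQ (N ^ m * N ^ rL) (D * cstar D) ∨ RDvdQ (N ^ m * N ^ rR) (D * cstar D) := by
  obtain ⟨Q1, a, Q2, c, b, hQ1, hQ2, hQe, hDe, hb, hbN⟩ := hS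
  obtain ⟨j, hj, hj'⟩ := hQ1.norm
  obtain ⟨k, hk, hk'⟩ := hQ2.norm
  have hbs : cstar b = -b := by rw [eq_neg_iff_add_eq_zero, add_comm]; exact hb
  have hpow : ∀ m : ℕ, 1 ≤ m → ∀ A, RDvdQ N (qPoly (N ^ m) * A) := fun m hm A =>
    RDvdQ.mul_right (RDvdQ.trans (dvd_pow_self N (by omega)) (RDvdQ.refl _)) _
  have hbN1 : RDvdQ N (b * cstar b) := RDvdQ.trans (dvd_pow_self N (by omega)) hbN
  have main : ∀ r, r ≤ m → r ≤ j → r ≤ k → RDvdQ (N ^ m * N ^ r) (D * cstar D) := by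
    intro r hrm hrj hrk
    have dv : ∀ {s}, r ≤ s → ∀ A, RDvdQ (N ^ r) (qPoly (N ^ s) * A) := fun hs A =>
      RDvdQ.mul_right (RDvdQ.trans (pow_dvd_pow N hs) (RDvdQ.refl _)) _
    set E := Q1 * c + a * Q2 with hE
    have hEs : cstar E = cstar c * cstar Q1 + cstar Q2 * cstar a := by
      rw [hE, cstar_add, cstar_mul, cstar_mul]
    have e1 : D * cstar D = Q1 * (b * (Q2 * cstar Q2) * cstar b) * cstar Q1
        + qPoly (N ^ m) * ((Q1 * b * Q2) * cstar E + cstar ((Q1 * b * Q2) * cstar E)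
          + qPoly (N ^ m) * (E * cstar E)) := by
      rw [hDe, cstar_add, cstar_mul (qPoly (N ^ m)), cstar_qPoly, ← qPoly_comm, cstar_mul _ (cstar E),
        cstar_cstar, cstar_mul (Q1 * b), cstar_mul Q1 b, add_mul, mul_add, mul_add]
      rw [← mul_assoc (Q1 * b * Q2) (qPoly (N ^ m)), ← qPoly_comm (N ^ m) (Q1 * b * Q2),
        mul_assoc (qPoly (N ^ m)) E (qPoly (N ^ m) * _), ← mul_assoc E (qPoly (N ^ m)),
        ← qPoly_comm (N ^ m) E]
      noncomm_ring
    rw [e1]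
    refine RDvdQ.add ?_ ((RDvdQ.refl _).mul (RDvdQ.add ?_ (dv hrm _)))
    · rw [hk, ← qPoly_comm (N ^ k) b]
      refine RDvdQ.mul_right (RDvdQ.mul_left ?_ _) _
      rw [mul_assoc, mul_comm (N ^ m)]
      exact (RDvdQ.trans (pow_dvd_pow N hrk) (RDvdQ.refl _)).mul hbN
    · have e2 : Q1 * b * Q2 * cstar E = Q1 * (b * Q2 * cstar c) * cstar Q1
          + Q1 * b * (Q2 * cstar Q2) * cstar a := by rw [hEs]; noncomm_ring
      rw [e2, cstar_add]
      rw [add_add_add_comm]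
      have h5 : RDvdQ (N ^ r) (Q1 * b * (Q2 * cstar Q2) * cstar a) := by
        rw [hk, ← qPoly_comm, mul_assoc]; exact dv hrk _
      refine RDvdQ.add ?_ (h5.add h5.cstar)
      generalize b * Q2 * cstar c = Y
      rw [cstar_mul _ (cstar Q1), cstar_mul Q1, cstar_cstar, ← mul_assoc, ← add_mul, ← mul_add,
        add_cstar, ← qPoly_comm, mul_assoc, hj]
      exact (RDvdQ.trans (pow_dvd_pow N hrj) (RDvdQ.refl _)).mul_left _
  have hLj : rL ≤ j := by
    by_contra hlt
    apply hD
    have h1 : RDvdQ (N ^ j * N) (cstar Q * D) := by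
      rw [← pow_succ]; exact RDvdQ.trans (pow_dvd_pow N (by omega)) hgL
    have e : cstar Q * D = qPoly (N ^ j) * (cstar Q2 * b * Q2)
        + qPoly (N ^ m) * (cstar Q * (Q1 * c + a * Q2)) := by
      rw [hDe, mul_add, ← mul_assoc _ (qPoly (N ^ m)), ← qPoly_comm (N ^ m), hQe, cstar_mul,
        show cstar Q2 * cstar Q1 * (Q1 * b * Q2) = cstar Q2 * (cstar Q1 * Q1) * (b * Q2) by noncomm_ring,
        hj', ← qPoly_comm (N ^ j)]
      noncomm_ring
    have h2 : RDvdQ (N ^ j * N) (qPoly (N ^ j) * (cstar Q2 * b * Q2)) := by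
      rw [eq_sub_of_add_eq e.symm]
      refine h1.sub (RDvdQ.mul_right (RDvdQ.trans ?_ (RDvdQ.refl _)) _)
      rw [← pow_succ]; exact pow_dvd_pow N (by omega)
    have h3 := RDvdQ.cancel (pow_ne_zero _ hN.ne_zero) h2
    have h4 : RDvdQ N (b * Q2) := by
      rcases keyK hN hbN1 h3 with h | h
      · have := h.cstar
        rw [cstar_mul, cstar_cstar, hbs, neg_mul] at this
        simpa using this.neg
      · exact h
    rw [hDe]
    refine RDvdQ.add ?_ (hpow m hm _)
    rw [mul_assoc]; exact h4.mul_left _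
  have hRk : rR ≤ k := by
    by_contra hlt
    apply hD
    have h1 : RDvdQ (N ^ k * N) (D * cstar Q) := by
      rw [← pow_succ]; exact RDvdQ.trans (pow_dvd_pow N (by omega)) hgR
    have e : D * cstar Q = qPoly (N ^ k) * (Q1 * b * cstar Q1)
        + qPoly (N ^ m) * ((Q1 * c + a * Q2) * cstar Q) := by
      rw [hDe, add_mul, hQe, cstar_mul,
        show Q1 * b * Q2 * (cstar Q2 * cstar Q1) = Q1 * b * (Q2 * cstar Q2) * cstar Q1 by noncomm_ring,
        hk, ← qPoly_comm (N ^ k)]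
      noncomm_ring
    have h2 : RDvdQ (N ^ k * N) (qPoly (N ^ k) * (Q1 * b * cstar Q1)) := by
      rw [eq_sub_of_add_eq e.symm]
      refine h1.sub (RDvdQ.mul_right (RDvdQ.trans ?_ (RDvdQ.refl _)) _)
      rw [← pow_succ]; exact pow_dvd_pow N (by omega)
    have h3 := RDvdQ.cancel (pow_ne_zero _ hN.ne_zero) h2
    have h4 : RDvdQ N (Q1 * b) := by
      rcases keyK hN hbN1 h3 with h | h
      · exact h
      · have := h.cstar
        rw [cstar_mul, cstar_cstar, hbs, mul_neg] at this
        simpa using this.neg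
    rw [hDe]
    exact RDvdQ.add (h4.mul_right _) (hpow m hm _)
  rcases le_total j k with h | h
  · exact Or.inl (main rL hL hLj (hLj.trans h))
  · exact Or.inr (main rR hR (hRk.trans h) hRk)
end Aux2

section Aux3
lemma dhQ_mul (A B : Hq[X]) : dhQ (A * B) = dhQ A * dhQ B := Polynomial.map_mul _
lemma dhQ_add (A B : Hq[X]) : dhQ (A + B) = dhQ A + dhQ B := Polynomial.map_add _
lemma dhQ_coeff (A : Hq[X]) (n : ℕ) : (dhQ A).coeff n = inl (A.coeff n) := by
  simp [dhQ]

lemma mp_coeff (P D : Hq[X]) (n : ℕ) : (mp P D).coeff n = inl (P.coeff n) + inr (D.coeff n) := by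
  rw [mp, Polynomial.coeff_add, Polynomial.coeff_C_mul, dhQ_coeff, dhQ_coeff]
  ext <;> simp

lemma mp_inj {P D P' D' : Hq[X]} (h : mp P D = mp P' D') : P = P' ∧ D = D' := by
  constructor
  · ext1 n
    have := congrArg (fun A => (A.coeff n).fst) h
    simpa [mp_coeff] using this
  · ext1 n
    have := congrArg (fun A => (A.coeff n).snd) h
    simpa [mp_coeff] using this

lemma eps_comm (A : Hq[X]) : dhQ A * C (ε : DHq) = C ε * dhQ A := by
  ext1 n
  rw [Polynomial.coeff_C_mul, Polynomial.coeff_mul_C, dhQ_coeff]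
  ext <;> simp

lemma mp_mul (P D P' D' : Hq[X]) : mp P D * mp P' D' = mp (P * P') (P * D' + D * P') := by
  have h0 : C (ε : DHq) * C (ε : DHq) = 0 := by
    rw [← Polynomial.C_mul]; simp
  have e : mp P D * mp P' D' = dhQ P * dhQ P' + (dhQ P * C ε) * dhQ D' + C ε * dhQ D * dhQ P'
      + C ε * (dhQ D * C ε) * dhQ D' := by
    rw [mp, mp]; noncomm_ring
  rw [e, eps_comm, eps_comm, ← mul_assoc (C ε) (C ε), h0, mp, dhQ_mul, dhQ_add, dhQ_mul, dhQ_mul]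
  noncomm_ring

lemma mp_one : mp 1 0 = 1 := by
  ext1 n
  rw [mp_coeff, Polynomial.coeff_one, Polynomial.coeff_one]
  split_ifs <;> ext <;> simp

lemma dPoly_eq (f : ℝ[X]) : dPoly f = mp (qPoly f) 0 := by
  simp [dPoly, mp, dhQ]

lemma cstar_mp (P D : Hq[X]) : cstar (mp P D) = mp (cstar P) (cstar D) := by
  ext1 n
  rw [cstar_coeffD, mp_coeff, mp_coeff, cstar_coeff, cstar_coeff]
  show inl (star _) + inr (star _) = _
  simp

lemma lin_mp (h : DHq) : X - C h = mp (X - C h.fst) (- C h.snd) := by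
  ext1 n
  rw [mp_coeff]
  simp only [Polynomial.coeff_sub, Polynomial.coeff_X, Polynomial.coeff_C, Polynomial.coeff_neg]
  split_ifs <;> ext <;> simp

lemma motion_LF {h : DHq} (hm : IsMotion (X - C h)) :
    ∃ f : ℝ[X], LF f (X - C h.fst) (- C h.snd) := by
  obtain ⟨f, hf, e⟩ := hm
  refine ⟨f, ?_⟩
  rw [lin_mp, cstar_mp, mp_mul, dPoly_eq] at e
  obtain ⟨e1, e2⟩ := mp_inj e
  set l := X - C h.fst with hl
  set d := - C h.snd with hd
  have hl0 : l ≠ 0 := Polynomial.X_sub_C_ne_zero _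
  have h2 : cstar l * l = qPoly f := by
    apply mul_left_cancel₀ hl0
    rw [← mul_assoc, e1, qPoly_comm]
  refine ⟨⟨_, hl⟩, e1, h2, e2, ?_⟩
  have : qPoly f * (cstar l * d + cstar d * l) = 0 := by
    have : cstar l * (l * cstar d + d * cstar l) * l = 
      (cstar l * l) * (cstar d * l) + cstar l * d * (cstar l * l) := by noncomm_ring
    rw [e2, h2, ← qPoly_comm] at this
    rw [mul_add, add_comm, ← this]; simp
  exact (mul_eq_zero.1 this).resolve_left (qPoly_ne hf)

lemma LF.monic {f : ℝ[X]} {l d : Hq[X]} (h : LF f l d) : f.Monic ∧ f.natDegree = 2 := by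
  obtain ⟨p, hp⟩ := h.lin
  have h1 := h.h1
  rw [hp, cstar_lin] at h1
  have hm : (qPoly f).Monic := by
    rw [← h1]; exact (Polynomial.monic_X_sub_C _).mul (Polynomial.monic_X_sub_C _)
  constructor
  · have := hm
    rw [Polynomial.Monic, Polynomial.leadingCoeff, qPoly,
      Polynomial.natDegree_map_eq_of_injective (algebraMap ℝ Hq).injective] at this
    rw [Polynomial.coeff_map] at this
    exact (algebraMap ℝ Hq).injective (this.trans (map_one _).symm)
  · rw [← Polynomial.natDegree_map_eq_of_injective (algebraMap ℝ Hq).injective f]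
    show (qPoly f).natDegree = 2
    rw [← h1, (Polynomial.monic_X_sub_C _).natDegree_mul (Polynomial.monic_X_sub_C _)]
    simp

lemma list_norm (L : List DHq) (hL : ∀ h ∈ L, IsMotion (X - C h)) :
    ∃ P D F, (L.map fun h => X - C h).prod = mp P D ∧ P * cstar P = qPoly F ∧
      ∀ h ∈ L, ∃ f, f ∣ F ∧ LF f (X - C h.fst) (- C h.snd) := by
  induction L with
  | nil => exact ⟨1, 0, 1, by simp [mp_one], by simp [cstar_one, qPoly_one], by simp⟩
  | cons h L ih =>
    obtain ⟨P, D, F, e1, e2, e3⟩ := ih fun x hx => hL x (List.mem_cons_of_mem _ hx)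
    obtain ⟨f, hf⟩ := motion_LF (hL h List.mem_cons_self)
    refine ⟨_, _, f * F, by rw [List.map_cons, List.prod_cons, e1, lin_mp, mp_mul], ?_, ?_⟩
    · rw [cstar_mul, show (X - C h.fst) * P * (cstar P * cstar (X - C h.fst)) =
        (X - C h.fst) * (P * cstar P) * cstar (X - C h.fst) by noncomm_ring, e2, ← qPoly_comm,
        mul_assoc, hf.h1, ← qPoly_mul, mul_comm]
    · intro x hx
      rcases List.mem_cons.1 hx with rfl | hx
      · exact ⟨f, dvd_mul_right _ _, hf⟩
      · obtain ⟨g, hg, hg'⟩ := e3 x hx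
        exact ⟨g, hg.mul_left _, hg'⟩

lemma list_fact {N : ℝ[X]} (L : List DHq) (hL : ∀ h ∈ L, LF N (X - C h.fst) (- C h.snd)) :
    ∃ P D, (L.map fun h => X - C h).prod = mp P D ∧ Fact2 N P D := by
  induction L using List.reverseRecOn with
  | nil => exact ⟨1, 0, by simp [mp_one], .one⟩
  | append_singleton L h ih =>
    obtain ⟨P, D, e, hF⟩ := ih fun x hx => hL x (by simp [hx])
    refine ⟨_, _, ?_, hF.snoc _ _ _ _ (hL h (by simp))⟩
    rw [List.map_append, List.prod_append, e]
    simp only [List.map_cons, List.map_nil, List.prod_cons, List.prod_nil, mul_one]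
    rw [lin_mp, mp_mul, add_comm]

lemma monic_dvd_pow {N f : ℝ[X]} (hN : Irreducible N) (hNm : N.Monic) {n : ℕ} (hf : f.Monic)
    (h : f ∣ N ^ n) : ∃ i ≤ n, f = N ^ i := by
  obtain ⟨i, hi, ha⟩ := (dvd_prime_pow hN.prime n).1 h
  exact ⟨i, hi, Polynomial.eq_of_monic_of_associated hf (hNm.pow i) ha⟩

end Aux3

/-- For a primary-norm motion polynomial admitting a linear factorization, `c·g_L` or
`c·g_R` divides `D·D*`. -/
theorem primary_cg_divides_norm
    (n : ℕ) (c : ℝ[X]) (Q D : Hq[X]) (N : ℝ[X]) (M : DHq[X]) (gL gR : ℝ[X])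
    (hM : M = mp (qPoly c * Q) D)
    (hc : c.Monic) (hmonic : M.Monic) (hmotion : IsMotion M)
    (hred : ReducedD M) (hbdd : BoundedD M) (hQred : ReducedQ Q)
    (hdeg : M.natDegree = n)
    (hN2 : N.natDegree = 2) (hNirr : Irreducible N)
    (hQnorm : qPoly (c ^ 2) * (Q * cstar Q) = qPoly (N ^ n))
    (hnorm : M * cstar M = dPoly (N ^ n))
    (hgL : IsMrpf2 gL c (cstar Q * D)) (hgR : IsMrpf2 gR c (D * cstar Q))
    (hfact : HasLinFact M) :
    RDvdQ (c * gL) (D * cstar D) ∨ RDvdQ (c * gR) (D * cstar D) := by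
  obtain ⟨L, hL, hML⟩ := hfact
  have hlc : N.leadingCoeff ≠ 0 := Polynomial.leadingCoeff_ne_zero.2 hNirr.ne_zero
  obtain ⟨N0, hN0m, hass⟩ : ∃ N0 : ℝ[X], N0.Monic ∧ Associated N N0 := by
    refine ⟨N * C N.leadingCoeff⁻¹, Polynomial.monic_mul_leadingCoeff_inv hNirr.ne_zero, ?_⟩
    exact (associated_mul_unit_right _ _ (Polynomial.isUnit_C.2 (inv_ne_zero hlc).isUnit))
  have hN0irr : Irreducible N0 := hass.irreducible hNirr
  have hN02 : N0.natDegree = 2 := by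
    rw [← hN2]; exact (Polynomial.natDegree_eq_of_degree_eq (Polynomial.degree_eq_degree_of_associated hass)).symm
  have hpass : Associated (N ^ n) (N0 ^ n) := hass.pow_pow
  -- all factors have norm N0
  obtain ⟨P1, D1, F, e1, e2, e3⟩ := list_norm L hL
  have hPD1 : qPoly c * Q = P1 ∧ D = D1 := mp_inj (by rw [← hM, hML, e1])
  have hF : F = N ^ n := by
    apply qPoly_inj
    rw [← e2, ← hPD1.1, ← hQnorm, cstar_mul, cstar_qPoly, ← qPoly_comm c (cstar Q), pow_two,
      qPoly_mul, mul_assoc, ← mul_assoc Q (qPoly c), ← qPoly_comm c Q]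
    simp only [mul_assoc]
  have hall : ∀ h ∈ L, LF N0 (X - C h.fst) (- C h.snd) := by
    intro h hh
    obtain ⟨f, hfF, hf⟩ := e3 h hh
    obtain ⟨hfm, hf2⟩ := hf.monic
    rw [hF] at hfF
    obtain ⟨i, -, hi⟩ := monic_dvd_pow hN0irr hN0m hfm (hfF.trans hpass.dvd)
    have : i = 1 := by
      rw [hi, Polynomial.natDegree_pow, hN02] at hf2; omega
    rw [this, pow_one] at hi
    rw [← hi]; exact hf
  obtain ⟨P, D', e4, hFact⟩ := list_fact L hall
  have hPD : qPoly c * Q = P ∧ D = D' := mp_inj (by rw [← hM, hML, e4])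
  obtain ⟨rfl, rfl⟩ := hPD
  obtain ⟨m, Q', hPQ, hQ', hor⟩ := struc_exists hN02 hN0irr hFact
  -- c is a power of N0
  obtain ⟨i, -, hci⟩ : ∃ i ≤ n, c = N0 ^ i := by
    refine monic_dvd_pow hN0irr hN0m hc (dvd_trans ?_ hpass.dvd)
    exact (dvd_pow_self c two_ne_zero).trans (RDvdQ.of_real ⟨_, hQnorm.symm⟩)
  have hN0ne : N0 ≠ 1 := fun h => hN0irr.not_isUnit (h ▸ isUnit_one)
  have hQN : ¬ RDvdQ N0 Q := fun h => hN0ne (hQred N0 hN0m h)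
  have aux : ∀ (i m : ℕ) (A B : Hq[X]), qPoly (N0 ^ i) * A = qPoly (N0 ^ m) * B → ¬ RDvdQ N0 B →
      i ≤ m := by
    intro i m A B hAB hB
    by_contra hlt
    apply hB
    have hd : RDvdQ (N0 ^ m * N0) (qPoly (N0 ^ m) * B) := by
      rw [← hAB, ← pow_succ]
      exact RDvdQ.mul_right (RDvdQ.trans (pow_dvd_pow _ (by omega)) (RDvdQ.refl _)) _
    exact RDvdQ.cancel (pow_ne_zero _ hN0irr.ne_zero) hd
  rw [hci] at hPQ
  have him : i = m := le_antisymm (aux _ _ _ _ hPQ hQ') (aux _ _ _ _ hPQ.symm hQN)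
  subst him
  have hQQ : Q = Q' := mul_left_cancel₀ (qPoly_ne (pow_ne_zero _ hN0irr.ne_zero)) hPQ
  subst hQQ
  subst hci
  obtain ⟨hgLm, hgLc, hgLd, -⟩ := hgL
  obtain ⟨hgRm, hgRc, hgRd, -⟩ := hgR
  obtain ⟨rL, hrL, rfl⟩ := monic_dvd_pow hN0irr hN0m hgLm hgLc
  obtain ⟨rR, hrR, rfl⟩ := monic_dvd_pow hN0irr hN0m hgRm hgRc
  have hDN : 1 ≤ i → ¬ RDvdQ N0 D := by
    intro hi hd
    obtain ⟨B, hB⟩ := hd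
    apply hN0ne
    apply hred N0 hN0m
    obtain ⟨k, rfl⟩ : ∃ k, i = k + 1 := ⟨i - 1, by omega⟩
    refine ⟨mp (qPoly (N0 ^ k) * Q) B, ?_⟩
    rw [hM, dPoly_eq, mp_mul, hB, pow_succ', qPoly_mul]
    simp [mul_assoc]
  rcases hor with hi | ⟨hi, h⟩ | ⟨hi, h⟩
  · subst hi
    left
    obtain rfl : rL = 0 := by omega
    exact ⟨D * cstar D, by simp [qPoly_one]⟩
  · exact absurd h (hDN hi)
  · exact finish hN0irr hi h (hDN hi) hrL hrR hgLd hgRd
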